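/- Let P ∈ ℝ^{m×m} be an orthogonal projection matrix (P symmetric with P² = P), let σ ∈ ℝ^m be its diagonal (σ_i = P_ii), Σ = Diag(σ), and let P^(2) be the entrywise square of P. Write ‖x‖_Σ = (Σ_i σ_i x_i²)^{1/2} and let ∘ denote the entrywise (Schur) product. Then for all i, j ∈ [m] and all x, y ∈ ℝ^m with X = Diag(x): (1) σ_i = Σ_{j∈[m]} P_ij²; (2) 0 ⪯ P^(2) ⪯ Σ ⪯ I in the Loewner order; (3) P_ij² ≤ σ_i·σ_j; (4) |(P^(2)x)_i| ≤ σ_i·‖x‖_Σ; (5) |(P^(2)x)_i| ≤ σ_i·‖x‖_∞; (6) Σ_{i∈[m]} σ_i = rank(P); (7) |yᵀXP^(2)y| ≤ ‖y‖_Σ²·‖x‖_Σ; and (8) |yᵀ(P ∘ (PXP))y| ≤ ‖y‖_Σ²·‖x‖_Σ. -/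

import Mathlib

open Matrix Real BigOperators Pointwise

/-- The weighted norm `‖x‖_σ = (∑ i, σ i * x i ^ 2) ^ (1/2)`. -/
noncomputable def wNorm {m : ℕ} (σ x : Fin m → ℝ) : ℝ :=
  Real.sqrt (∑ i, σ i * x i ^ 2)

section helpers

variable {m : ℕ} (P : Matrix (Fin m) (Fin m) ℝ)

lemma pm_symm (hsymm : Pᵀ = P) (i j : Fin m) : P i j = P j i := by
  conv_lhs => rw [← hsymm]
  rfl

lemma pm_idem (hsymm : Pᵀ = P) (hidem : P * P = P) (i j : Fin m) :
    P i j = ∑ k, P i k * P j k := by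
  conv_lhs => rw [← hidem]
  rw [Matrix.mul_apply]
  exact Finset.sum_congr rfl fun k _ => by rw [pm_symm P hsymm k j]

lemma pm_quad_eq (hsymm : Pᵀ = P) (hidem : P * P = P) (z : Fin m → ℝ) :
    ∑ i, ∑ j, z i * P i j * z j = ∑ k, (∑ i, P i k * z i) ^ 2 := by
  calc ∑ i, ∑ j, z i * P i j * z j
      = ∑ i, ∑ j, ∑ k, (P i k * z i) * (P j k * z j) := by
        refine Finset.sum_congr rfl fun i _ => Finset.sum_congr rfl fun j _ => ?_
        rw [pm_idem P hsymm hidem i j, Finset.mul_sum, Finset.sum_mul]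
        exact Finset.sum_congr rfl fun k _ => by ring
    _ = ∑ k, ∑ i, ∑ j, (P i k * z i) * (P j k * z j) := by
        rw [Finset.sum_comm' (t' := Finset.univ) (s' := fun _ => Finset.univ) (by simp)]
        rw [Finset.sum_comm]
        conv_rhs => rw [Finset.sum_comm]
        refine Finset.sum_congr rfl fun i _ => ?_
        rw [Finset.sum_comm]
    _ = _ := by
        refine Finset.sum_congr rfl fun k _ => ?_
        rw [sq, Finset.sum_mul_sum]

lemma pm_quad_nonneg (hsymm : Pᵀ = P) (hidem : P * P = P) (z : Fin m → ℝ) :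
    0 ≤ ∑ i, ∑ j, z i * P i j * z j := by
  rw [pm_quad_eq P hsymm hidem]
  positivity

lemma pm_quad_le (hsymm : Pᵀ = P) (hidem : P * P = P) (z : Fin m → ℝ) :
    ∑ i, ∑ j, z i * P i j * z j ≤ ∑ i, z i ^ 2 := by
  have h1 := pm_quad_eq P hsymm hidem z
  have h2 : ∑ k, z k * (∑ i, P i k * z i) = ∑ i, ∑ j, z i * P i j * z j := by
    refine Finset.sum_congr rfl fun i _ => ?_
    rw [Finset.mul_sum]
    exact Finset.sum_congr rfl fun j _ => by rw [pm_symm P hsymm j i]; ring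
  have h3 : 0 ≤ ∑ k, (z k - ∑ i, P i k * z i) ^ 2 := by positivity
  have h4 : ∑ k, (z k - ∑ i, P i k * z i) ^ 2 = ∑ k, z k ^ 2
      - 2 * ∑ k, z k * (∑ i, P i k * z i) + ∑ k, (∑ i, P i k * z i) ^ 2 := by
    rw [Finset.mul_sum, ← Finset.sum_sub_distrib, ← Finset.sum_add_distrib]
    exact Finset.sum_congr rfl fun k _ => by ring
  linarith

/-- The key identity for Schur products. -/
lemma pm_schur (hsymm : Pᵀ = P) (x y : Fin m → ℝ) :
    y ⬝ᵥ (Matrix.of fun i j => P i j * (P * Matrix.diagonal x * P) i j).mulVec y =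
      ∑ k, x k * ∑ i, ∑ j, (P i k * y i) * P i j * (P j k * y j) := by
  have h : ∀ i j, (P * Matrix.diagonal x * P) i j = ∑ k, x k * (P i k * P j k) := by
    intro i j
    rw [Matrix.mul_apply]
    refine Finset.sum_congr rfl fun k _ => ?_
    rw [Matrix.mul_diagonal, pm_symm P hsymm k j]; ring
  simp only [dotProduct, Matrix.mulVec, Matrix.of_apply, h, Finset.mul_sum, Finset.sum_mul]
  conv_rhs => rw [Finset.sum_comm]
  refine Finset.sum_congr rfl fun i _ => ?_
  conv_rhs => rw [Finset.sum_comm]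
  refine Finset.sum_congr rfl fun j _ => Finset.sum_congr rfl fun k _ => ?_
  ring

lemma pm_rank (hidem : P * P = P) : ∑ i, P i i = (P.rank : ℝ) := by
  have h : IsIdempotentElem (Matrix.toLin' P) := by
    unfold IsIdempotentElem
    rw [Module.End.mul_eq_comp, ← Matrix.toLin'_mul, hidem]
  have h2 := (LinearMap.IsIdempotentElem.isProj_range _ h).trace
  rw [Matrix.trace_toLin'_eq] at h2
  exact h2

end helpers

/-- properties of orthogonal projection matrices and leverage scores.
The norm `‖·‖` on `Fin m → ℝ` is the `ℓ∞` norm, and `M ⪯ N` is expressed as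
`(N - M).PosSemidef`. -/
theorem projection_matrix_properties {m : ℕ} (P : Matrix (Fin m) (Fin m) ℝ)
    (hsymm : Pᵀ = P) (hidem : P * P = P)
    (σ : Fin m → ℝ) (hσ : ∀ i, σ i = P i i) :
    let P2 : Matrix (Fin m) (Fin m) ℝ := Matrix.of fun i j => (P i j) ^ 2
    let Sg : Matrix (Fin m) (Fin m) ℝ := Matrix.diagonal σ
    -- (1)
    (∀ i, σ i = ∑ j, (P i j) ^ 2) ∧
    -- (2): 0 ⪯ P^(2) ⪯ Σ ⪯ I
    (P2.PosSemidef ∧ (Sg - P2).PosSemidef ∧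
      ((1 : Matrix (Fin m) (Fin m) ℝ) - Sg).PosSemidef) ∧
    -- (3)
    (∀ i j, (P i j) ^ 2 ≤ σ i * σ j) ∧
    -- (4)
    (∀ (x : Fin m → ℝ) (i : Fin m), |P2.mulVec x i| ≤ σ i * wNorm σ x) ∧
    -- (5)
    (∀ (x : Fin m → ℝ) (i : Fin m), |P2.mulVec x i| ≤ σ i * ‖x‖) ∧
    -- (6)
    ((∑ i, σ i) = (P.rank : ℝ)) ∧
    -- (7)
    (∀ x y : Fin m → ℝ,
      |y ⬝ᵥ (Matrix.diagonal x * P2).mulVec y| ≤ wNorm σ y ^ 2 * wNorm σ x) ∧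
    -- (8)
    (∀ x y : Fin m → ℝ,
      |y ⬝ᵥ (Matrix.of fun i j =>
          P i j * (P * Matrix.diagonal x * P) i j).mulVec y| ≤
        wNorm σ y ^ 2 * wNorm σ x) := by
  intro P2 Sg
  have h1 : ∀ i, σ i = ∑ j, (P i j) ^ 2 := by
    intro i
    rw [hσ, pm_idem P hsymm hidem]
    exact Finset.sum_congr rfl fun j _ => by ring
  have hσ0 : ∀ i, 0 ≤ σ i := fun i => by rw [h1]; positivity
  have h3 : ∀ i j, (P i j) ^ 2 ≤ σ i * σ j := by
    intro i j
    rw [pm_idem P hsymm hidem i j, h1 i, h1 j]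
    exact Finset.sum_mul_sq_le_sq_mul_sq _ _ _
  have hσ1 : ∀ i, σ i ≤ 1 := by
    intro i
    have := h1 i
    have h : (P i i) ^ 2 ≤ ∑ j, (P i j) ^ 2 :=
      Finset.single_le_sum (f := fun j => (P i j) ^ 2) (fun j _ => sq_nonneg _) (Finset.mem_univ i)
    rw [← this, ← hσ] at h
    nlinarith [hσ0 i]
  have h1' : ∀ k, σ k = ∑ i, (P i k) ^ 2 := by
    intro k
    rw [h1]
    exact Finset.sum_congr rfl fun j _ => by rw [pm_symm P hsymm]
  have hw0 : ∀ x : Fin m → ℝ, 0 ≤ wNorm σ x := fun x => Real.sqrt_nonneg _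
  have hwsq : ∀ x : Fin m → ℝ, wNorm σ x ^ 2 = ∑ i, σ i * x i ^ 2 := fun x =>
    Real.sq_sqrt (Finset.sum_nonneg fun i _ => mul_nonneg (hσ0 i) (sq_nonneg _))
  have hP2x : ∀ (x : Fin m → ℝ) i, P2.mulVec x i = ∑ j, P i j ^ 2 * x j := fun x i => rfl
  have hP2eq : P2 = Matrix.of fun i j => P i j * (P * Matrix.diagonal (fun _ : Fin m => (1:ℝ)) * P) i j := by
    ext i j
    have : Matrix.diagonal (fun _ : Fin m => (1:ℝ)) = 1 := Matrix.diagonal_one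
    simp only [P2, Matrix.of_apply, this, mul_one, hidem, sq]
  have hz : ∀ y : Fin m → ℝ, ∑ k, ∑ i, (P i k * y i) ^ 2 = ∑ i, σ i * y i ^ 2 := by
    intro y
    rw [Finset.sum_comm]
    refine Finset.sum_congr rfl fun i _ => ?_
    rw [h1 i, Finset.sum_mul]
    exact Finset.sum_congr rfl fun j _ => by ring
  have hquad : ∀ y : Fin m → ℝ, y ⬝ᵥ P2.mulVec y =
      ∑ k, ∑ i, ∑ j, (P i k * y i) * P i j * (P j k * y j) := by
    intro y
    rw [hP2eq, pm_schur P hsymm]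
    simp only [one_mul]
  have hP2H : P2.IsHermitian := by
    ext i j
    simp [P2, pm_symm P hsymm i j]
  have hSH : Sg.IsHermitian := by
    ext i j
    simp only [Sg, Matrix.conjTranspose_apply, Matrix.diagonal_apply, star_trivial]
    by_cases h : i = j
    · subst h; rfl
    · rw [if_neg h, if_neg (Ne.symm h)]
  have hSq : ∀ y : Fin m → ℝ, y ⬝ᵥ Sg.mulVec y = ∑ i, σ i * y i ^ 2 := by
    intro y
    simp only [Sg, dotProduct, Matrix.mulVec_diagonal]
    exact Finset.sum_congr rfl fun j _ => by ring
  have h4a : ∀ (x : Fin m → ℝ) (i : Fin m), ∑ j, P i j ^ 2 * |x j| ≤ σ i * wNorm σ x := by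
    intro x i
    have hs0 : 0 ≤ √(σ i) := Real.sqrt_nonneg _
    calc ∑ j, P i j ^ 2 * |x j| ≤ ∑ j, √(σ i) * (|P i j| * (√(σ j) * |x j|)) := by
          refine Finset.sum_le_sum fun j _ => ?_
          have hb : |P i j| ≤ √(σ i) * √(σ j) := by
            rw [← Real.sqrt_mul (hσ0 i)]
            exact Real.abs_le_sqrt (h3 i j)
          calc P i j ^ 2 * |x j| = |P i j| * |P i j| * |x j| := by rw [← sq_abs]; ring
            _ ≤ (√(σ i) * √(σ j)) * |P i j| * |x j| := by gcongr
            _ = _ := by ring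
      _ = √(σ i) * ∑ j, |P i j| * (√(σ j) * |x j|) := by rw [Finset.mul_sum]
      _ ≤ √(σ i) * (√(∑ j, |P i j| ^ 2) * √(∑ j, (√(σ j) * |x j|) ^ 2)) := by
          gcongr
          exact Real.sum_mul_le_sqrt_mul_sqrt _ _ _
      _ = √(σ i) * (√(σ i) * wNorm σ x) := by
          have e1 : ∑ j, |P i j| ^ 2 = σ i := by rw [h1]; simp only [sq_abs]
          have e2 : ∑ j, (√(σ j) * |x j|) ^ 2 = ∑ j, σ j * x j ^ 2 :=
            Finset.sum_congr rfl fun j _ => by rw [mul_pow, Real.sq_sqrt (hσ0 j), sq_abs]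
          rw [e1, e2]; rfl
      _ = _ := by rw [← mul_assoc, Real.mul_self_sqrt (hσ0 i)]
  have habs : ∀ (x : Fin m → ℝ) i, |P2.mulVec x i| ≤ ∑ j, P i j ^ 2 * |x j| := by
    intro x i
    rw [hP2x]
    refine (Finset.abs_sum_le_sum_abs _ _).trans (le_of_eq ?_)
    exact Finset.sum_congr rfl fun j _ => by rw [abs_mul, abs_of_nonneg (sq_nonneg (P i j))]
  have h4 : ∀ (x : Fin m → ℝ) (i : Fin m), |P2.mulVec x i| ≤ σ i * wNorm σ x :=
    fun x i => (habs x i).trans (h4a x i)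
  refine ⟨h1, ⟨?_, ?_, ?_⟩, h3, h4, ?_, ?_, ?_, ?_⟩
  · refine Matrix.PosSemidef.of_dotProduct_mulVec_nonneg hP2H fun y => ?_
    rw [star_trivial, hquad]
    exact Finset.sum_nonneg fun k _ => pm_quad_nonneg P hsymm hidem fun i => P i k * y i
  · refine Matrix.PosSemidef.of_dotProduct_mulVec_nonneg (hSH.sub hP2H) fun y => ?_
    rw [star_trivial, Matrix.sub_mulVec, dotProduct_sub, hquad, hSq, ← hz, sub_nonneg]
    exact Finset.sum_le_sum fun k _ => pm_quad_le P hsymm hidem fun i => P i k * y i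
  · refine Matrix.PosSemidef.of_dotProduct_mulVec_nonneg (Matrix.isHermitian_one.sub hSH) fun y => ?_
    rw [star_trivial, Matrix.sub_mulVec, dotProduct_sub, hSq, Matrix.one_mulVec, sub_nonneg, dotProduct]
    exact Finset.sum_le_sum fun k _ => by nlinarith [hσ1 k, sq_nonneg (y k)]
  · intro x i
    refine (habs x i).trans ?_
    rw [h1 i, Finset.sum_mul]
    refine Finset.sum_le_sum fun j _ => ?_
    have := norm_le_pi_norm x j
    rw [Real.norm_eq_abs] at this
    gcongr
  · simp only [hσ]
    exact pm_rank P hidem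
  · intro x y
    have e : y ⬝ᵥ (Matrix.diagonal x * P2).mulVec y = ∑ i, y i * (x i * P2.mulVec y i) := by
      rw [← Matrix.mulVec_mulVec]
      simp only [dotProduct, Matrix.mulVec_diagonal]
    rw [e]
    calc |∑ i, y i * (x i * P2.mulVec y i)| ≤ ∑ i, |y i * (x i * P2.mulVec y i)| :=
          Finset.abs_sum_le_sum_abs _ _
      _ ≤ ∑ i, wNorm σ y * ((√(σ i) * |y i|) * (√(σ i) * |x i|)) := by
          refine Finset.sum_le_sum fun i _ => ?_
          rw [abs_mul, abs_mul]
          calc |y i| * (|x i| * |P2.mulVec y i|) ≤ |y i| * (|x i| * (σ i * wNorm σ y)) := by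
                gcongr
                exact h4 y i
            _ = |y i| * (|x i| * ((√(σ i) * √(σ i)) * wNorm σ y)) := by
                rw [Real.mul_self_sqrt (hσ0 i)]
            _ = _ := by ring
      _ = wNorm σ y * ∑ i, (√(σ i) * |y i|) * (√(σ i) * |x i|) := by rw [Finset.mul_sum]
      _ ≤ wNorm σ y * (√(∑ i, (√(σ i) * |y i|) ^ 2) * √(∑ i, (√(σ i) * |x i|) ^ 2)) := by
          have := hw0 y
          gcongr
          exact Real.sum_mul_le_sqrt_mul_sqrt _ _ _
      _ = wNorm σ y * (wNorm σ y * wNorm σ x) := by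
          have e2 : ∀ x : Fin m → ℝ, ∑ j, (√(σ j) * |x j|) ^ 2 = ∑ j, σ j * x j ^ 2 := fun x =>
            Finset.sum_congr rfl fun j _ => by rw [mul_pow, Real.sq_sqrt (hσ0 j), sq_abs]
          rw [e2, e2]; rfl
      _ = _ := by ring
  · intro x y
    rw [pm_schur P hsymm]
    calc _ ≤ ∑ k, |x k * ∑ i, ∑ j, (P i k * y i) * P i j * (P j k * y j)| :=
          Finset.abs_sum_le_sum_abs _ _
      _ ≤ ∑ k, |x k| * ∑ i, (P i k * y i) ^ 2 := by
          refine Finset.sum_le_sum fun k _ => ?_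
          rw [abs_mul, abs_of_nonneg (pm_quad_nonneg P hsymm hidem fun i => P i k * y i)]
          exact mul_le_mul_of_nonneg_left (pm_quad_le P hsymm hidem fun i => P i k * y i)
            (abs_nonneg _)
      _ = ∑ i, y i ^ 2 * ∑ k, P i k ^ 2 * |x k| := by
          simp only [Finset.mul_sum]
          rw [Finset.sum_comm]
          exact Finset.sum_congr rfl fun i _ => Finset.sum_congr rfl fun k _ => by ring
      _ ≤ ∑ i, y i ^ 2 * (σ i * wNorm σ x) := by
          refine Finset.sum_le_sum fun i _ => ?_
          exact mul_le_mul_of_nonneg_left (h4a x i) (sq_nonneg _)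
      _ = _ := by
          rw [hwsq, Finset.sum_mul]
          exact Finset.sum_congr rfl fun i _ => by ring
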